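/- Let Ω ⊂ ℝ^d be compact and convex with non-negligible interior, take μ, ν ∈ 𝒫(Ω) with μ absolutely continuous with respect to Lebesgue measure, fix λ₀ > 0, set λ_{n+1} = λ_n/2, ν₀ = ν, and for each n ≥ 0 define ν_{n+1} = argmin_{ρ ∈ 𝒫(Ω)} (1/2)W₂²(ρ, μ) + λ_n W₁(ρ, ν_n). Then for all n ≥ 1, (1/2)W₂²(μ, ν_n) ≤ 2^{−2n+1} λ₀². -/

import Mathlib

/-! The bound is a one-step statement: if `ρ` minimizes `W₂²(·,μ)/2 + λ W₁(·,ν)` over `𝒫(Ω)`, then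
`W₂²(ρ,μ) ≤ λ²` (`W2sq_le_of_minimizer`); applied with `λ = λ₀/2^(n-1)` it is the claim.

To see it, take any coupling `γ` of `ρ` and `μ` and compare `ρ` with the interpolated measure
`ρ_t = ((1-t)x + ty)_# γ`, which lives on `Ω` by convexity. With `A = ∫ |x-y|² dγ`, one has
`W₂²(ρ_t,μ) ≤ (1-t)² A`, and gluing `γ` to a coupling of `ρ` and `ν` gives
`W₁(ρ_t,ν) ≤ W₁(ρ,ν) + t ∫ |x-y| dγ`. Minimality together with `2λ|x-y| ≤ λ² + |x-y|²` yields
`W₂²(ρ,μ) ≤ (1-t)² A + t(λ² + A)`. Taking the infimum over `γ` replaces `A` by `W₂²(ρ,μ)`;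
dividing by `t` and letting `t → 0` gives the bound. -/

open MeasureTheory Filter Topology

noncomputable section

abbrev Ed (d : ℕ) := EuclideanSpace ℝ (Fin d)

variable {d : ℕ}

/-- `γ` is a coupling (transport plan) between `μ` and `ν`. -/
def IsCoupling (μ ν : Measure (Ed d)) (γ : Measure (Ed d × Ed d)) : Prop :=
  γ.map Prod.fst = μ ∧ γ.map Prod.snd = ν

/-- The optimal transport cost `𝓘_c(μ,ν)` for the pointwise cost `c`. -/
def tCost (c : Ed d → Ed d → ℝ) (μ ν : Measure (Ed d)) : ℝ :=
  sInf {r | ∃ γ : Measure (Ed d × Ed d), IsCoupling μ ν γ ∧ r = ∫ p, c p.1 p.2 ∂γ}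

/-- The Wasserstein-1 distance. -/
def W1 (μ ν : Measure (Ed d)) : ℝ := tCost (fun x y => ‖x - y‖) μ ν

/-- The squared Wasserstein-2 distance `W₂²(μ,ν)`. -/
def W2sq (μ ν : Measure (Ed d)) : ℝ := tCost (fun x y => ‖x - y‖ ^ 2) μ ν

/-- The quadratic cost `c₂(x,y) = |x-y|²/2`. -/
def c2 (x y : Ed d) : ℝ := ‖x - y‖ ^ 2 / 2

/-- The Huber cost `c_{2,λ}`. -/
def huber (lam : ℝ) (x y : Ed d) : ℝ :=
  if ‖x - y‖ ≤ lam then ‖x - y‖ ^ 2 / 2 else lam * ‖x - y‖ - lam ^ 2 / 2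

/-- The `c`-transform on `Ω`: `φ^c(x) = inf_{y ∈ Ω} c(x,y) - φ(y)`. -/
def ctrans (c : Ed d → Ed d → ℝ) (Ω : Set (Ed d)) (φ : Ed d → ℝ) (x : Ed d) : ℝ :=
  sInf ((fun y => c x y - φ y) '' Ω)

/-- A Borel probability measure concentrated on `Ω`. -/
def ProbOn (Ω : Set (Ed d)) (μ : Measure (Ed d)) : Prop :=
  IsProbabilityMeasure μ ∧ μ Ωᶜ = 0

/-- `γ` is an optimal transport plan between `μ` and `ν` for cost `c`. -/
def IsOptimalPlan (c : Ed d → Ed d → ℝ) (μ ν : Measure (Ed d))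
    (γ : Measure (Ed d × Ed d)) : Prop :=
  IsCoupling μ ν γ ∧ ∀ γ' : Measure (Ed d × Ed d), IsCoupling μ ν γ' →
    ∫ p, c p.1 p.2 ∂γ ≤ ∫ p, c p.1 p.2 ∂γ'

/-- `T` is an optimal transport map from `μ` to `ν` for cost `c`. -/
def IsOptimalMap (c : Ed d → Ed d → ℝ) (μ ν : Measure (Ed d)) (T : Ed d → Ed d) : Prop :=
  AEMeasurable T μ ∧ μ.map T = ν ∧
    ∀ γ : Measure (Ed d × Ed d), IsCoupling μ ν γ →
      ∫ x, c x (T x) ∂μ ≤ ∫ p, c p.1 p.2 ∂γ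

/-- The WROF functional `(1/2) W₂²(μ,ρ) + λ W₁(ρ,ν)`. -/
def wrof (lam : ℝ) (μ ν ρ : Measure (Ed d)) : ℝ := W2sq μ ρ / 2 + lam * W1 ρ ν

/-- `ρ ∈ B_λ(μ)`: there exists an optimal plan for the Huber cost `c_{2,λ}` from `μ` to `ρ`
supported in `{|x-y| ≤ λ}`. -/
def Bset (lam : ℝ) (μ ρ : Measure (Ed d)) : Prop :=
  ∃ γ : Measure (Ed d × Ed d), IsOptimalPlan (huber lam) μ ρ γ ∧
    γ {p : Ed d × Ed d | lam < ‖p.1 - p.2‖} = 0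

/-- `φ` solves the dual problem `sup_{φ ∈ λ-Lip(Ω)} ∫ φ^{c₂} dμ + ∫ φ dν`. -/
def DualSol (Ω : Set (Ed d)) (lam : ℝ) (μ ν : Measure (Ed d)) (φ : Ed d → ℝ) : Prop :=
  LipschitzOnWith (Real.toNNReal lam) φ Ω ∧
    ∀ ψ : Ed d → ℝ, LipschitzOnWith (Real.toNNReal lam) ψ Ω →
      (∫ x, ctrans c2 Ω ψ x ∂μ) + ∫ x, ψ x ∂ν ≤ (∫ x, ctrans c2 Ω φ x ∂μ) + ∫ x, φ x ∂ν

/-- `φ ∈ ∂((1/2)W₂²(·,μ))(ρ)`, i.e. `φ ∈ C(Ω)` with `∫φ^{c₂}dμ + ∫φ dρ = (1/2)W₂²(ρ,μ)`. -/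
def InSubdiffW2 (Ω : Set (Ed d)) (μ ρ : Measure (Ed d)) (φ : Ed d → ℝ) : Prop :=
  ContinuousOn φ Ω ∧ (∫ x, ctrans c2 Ω φ x ∂μ) + ∫ x, φ x ∂ρ = W2sq ρ μ / 2

/-- The divergence `D_λ(ν,ρ)` with reference measure `μ`. -/
def Dlam (Ω : Set (Ed d)) (lam : ℝ) (μ ν ρ : Measure (Ed d)) : EReal :=
  ((W2sq ν μ / 2 : ℝ) : EReal) - ((W2sq ρ μ / 2 : ℝ) : EReal) -
    ⨆ φ ∈ {φ : Ed d → ℝ | InSubdiffW2 Ω μ ρ φ ∧ LipschitzOnWith (Real.toNNReal lam) φ Ω},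
      (((∫ x, φ x ∂ν) - ∫ x, φ x ∂ρ : ℝ) : EReal)

/-- `φ` is `c`-concave on `Ω`: `φ = ψ^c` for some `ψ`. -/
def CConcaveOn (c : Ed d → Ed d → ℝ) (Ω : Set (Ed d)) (φ : Ed d → ℝ) : Prop :=
  ∃ ψ : Ed d → ℝ, ∀ x ∈ Ω, φ x = ctrans c Ω ψ x

/-- The (topological) support of a measure. -/
def msupport {α : Type*} [TopologicalSpace α] [MeasurableSpace α] (γ : Measure α) : Set α :=
  {p | ∀ U : Set α, IsOpen U → p ∈ U → γ U ≠ 0}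

lemma IsCoupling.isProbabilityMeasure {μ ν : Measure (Ed d)} {γ : Measure (Ed d × Ed d)}
    (h : IsCoupling μ ν γ) [IsProbabilityMeasure μ] : IsProbabilityMeasure γ := by
  have : IsProbabilityMeasure (γ.map Prod.fst) := by rw [h.1]; infer_instance
  exact Measure.isProbabilityMeasure_of_map Prod.fst

lemma IsCoupling.swap {μ ν : Measure (Ed d)} {γ : Measure (Ed d × Ed d)}
    (h : IsCoupling μ ν γ) : IsCoupling ν μ (γ.map Prod.swap) := by
  constructor
  · rw [Measure.map_map measurable_fst measurable_swap]; exact h.2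
  · rw [Measure.map_map measurable_snd measurable_swap]; exact h.1

lemma W2sq_comm (μ ν : Measure (Ed d)) : W2sq μ ν = W2sq ν μ := by
  unfold W2sq tCost
  congr 1
  have key : ∀ μ ν : Measure (Ed d), ∀ γ, IsCoupling μ ν γ → ∃ γ', IsCoupling ν μ γ' ∧
      ∫ p, ‖p.1 - p.2‖ ^ 2 ∂γ = ∫ p, ‖p.1 - p.2‖ ^ 2 ∂γ' := by
    intro μ ν γ h
    refine ⟨_, h.swap, ?_⟩
    rw [integral_map measurable_swap.aemeasurable
      (Continuous.aestronglyMeasurable (by fun_prop))]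
    simp only [Prod.fst_swap, Prod.snd_swap]
    exact integral_congr_ae (ae_of_all _ fun p => by simp [norm_sub_rev])
  ext r
  constructor
  · rintro ⟨γ, h, rfl⟩; exact key _ _ γ h
  · rintro ⟨γ, h, rfl⟩; exact key _ _ γ h

lemma tCost_le {c : Ed d → Ed d → ℝ} (hc : ∀ x y, 0 ≤ c x y) {μ ν : Measure (Ed d)}
    {γ : Measure (Ed d × Ed d)} (h : IsCoupling μ ν γ) :
    tCost c μ ν ≤ ∫ p, c p.1 p.2 ∂γ := by
  refine csInf_le ⟨0, ?_⟩ ⟨γ, h, rfl⟩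
  rintro r ⟨γ, -, rfl⟩
  exact integral_nonneg fun p => hc _ _

lemma isCoupling_prod (μ ν : Measure (Ed d)) [IsProbabilityMeasure μ] [IsProbabilityMeasure ν] :
    IsCoupling μ ν (μ.prod ν) :=
  ⟨by simp [Measure.map_fst_prod], by simp [Measure.map_snd_prod]⟩

lemma ProbOn.ae_mem {Ω : Set (Ed d)} {μ : Measure (Ed d)} (h : ProbOn Ω μ) : ∀ᵐ x ∂μ, x ∈ Ω :=
  mem_ae_iff.2 h.2

lemma ae_mem_of_map {α : Type*} [MeasurableSpace α] {Γ : Measure α} {f : α → Ed d}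
    (hf : Measurable f) {Ω : Set (Ed d)} {μ : Measure (Ed d)} (h : ProbOn Ω μ)
    (hmap : Γ.map f = μ) : ∀ᵐ p ∂Γ, f p ∈ Ω :=
  ae_of_ae_map hf.aemeasurable (hmap ▸ h.ae_mem)

/-- A continuous function on `E × E`, integrated along a map into `E × E` whose two components
almost surely stay in a compact set, is integrable. -/
lemma integrable_of_ae_mem {α : Type*} [MeasurableSpace α] {Γ : Measure α} [IsFiniteMeasure Γ]
    {Ω : Set (Ed d)} (hΩ : IsCompact Ω) {f g : α → Ed d} (hf : Measurable f) (hg : Measurable g)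
    (hfΩ : ∀ᵐ p ∂Γ, f p ∈ Ω) (hgΩ : ∀ᵐ p ∂Γ, g p ∈ Ω) {F : Ed d × Ed d → ℝ} (hF : Continuous F) :
    Integrable (fun p => F (f p, g p)) Γ := by
  obtain ⟨C, hC⟩ := (hΩ.prod hΩ).exists_bound_of_continuousOn hF.continuousOn
  refine Integrable.of_bound (hF.measurable.comp (hf.prodMk hg)).aestronglyMeasurable C ?_
  filter_upwards [hfΩ, hgΩ] with p h1 h2 using hC _ ⟨h1, h2⟩

open scoped ProbabilityTheory in
/-- Gluing: couplings `γ` of `(ρ, μ)` and `π` of `(ρ, ν)` come from a joint law of three points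
`((x, y), z)` with `(x, y) ∼ γ` and `(x, z) ∼ π`. -/
lemma exists_gluing {ρ μ ν : Measure (Ed d)} [IsProbabilityMeasure ρ]
    {γ π : Measure (Ed d × Ed d)} (hγ : IsCoupling ρ μ γ) (hπ : IsCoupling ρ ν π) :
    ∃ Γ : Measure ((Ed d × Ed d) × Ed d), Γ.map Prod.fst = γ ∧
      Γ.map (fun q => (q.1.1, q.2)) = π := by
  have := hγ.isProbabilityMeasure
  have := hπ.isProbabilityMeasure
  have hm : Measurable (fun q : (Ed d × Ed d) × Ed d => (q.1.1, q.2)) := by fun_prop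
  refine ⟨γ ⊗ₘ (π.condKernel.comap Prod.fst measurable_fst), Measure.fst_compProd _ _, ?_⟩
  conv_rhs => rw [← π.disintegrate π.condKernel]
  ext s hs
  have hfst : π.fst = γ.map Prod.fst := by rw [hγ.1]; exact hπ.1
  rw [Measure.map_apply hm hs, Measure.compProd_apply (hm hs), Measure.compProd_apply hs, hfst,
    lintegral_map (ProbabilityTheory.Kernel.measurable_kernel_prodMk_left hs) measurable_fst]
  rfl

lemma W1_interp_le {Ω : Set (Ed d)} (hΩc : IsCompact Ω)
    {ρ μ ν : Measure (Ed d)} (hρ : ProbOn Ω ρ) (hμ : ProbOn Ω μ) (hν : ProbOn Ω ν)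
    {γ : Measure (Ed d × Ed d)} (hγ : IsCoupling ρ μ γ) {t : ℝ} (ht0 : 0 ≤ t) :
    W1 (γ.map fun p => (1 - t) • p.1 + t • p.2) ν ≤ W1 ρ ν + t * ∫ p, ‖p.1 - p.2‖ ∂γ := by
  have := hρ.1
  have := hν.1
  have := hγ.isProbabilityMeasure
  rw [← sub_le_iff_le_add]
  refine le_csInf ⟨_, _, isCoupling_prod ρ ν, rfl⟩ ?_
  rintro r ⟨π, hπ, rfl⟩
  rw [sub_le_iff_le_add]
  obtain ⟨Γ, hΓ1, hΓ2⟩ := exists_gluing hγ hπ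
  have : IsProbabilityMeasure (Γ.map Prod.fst) := by rwa [hΓ1]
  have : IsProbabilityMeasure Γ := Measure.isProbabilityMeasure_of_map Prod.fst
  have hm : Measurable (fun q : (Ed d × Ed d) × Ed d => (q.1.1, q.2)) := by fun_prop
  have hmx : Γ.map (fun q => q.1.1) = ρ := by
    rw [← hγ.1, ← hΓ1, Measure.map_map measurable_fst measurable_fst]; rfl
  have hmy : Γ.map (fun q => q.1.2) = μ := by
    rw [← hγ.2, ← hΓ1, Measure.map_map measurable_snd measurable_fst]; rfl
  have hmz : Γ.map (fun q => q.2) = ν := by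
    rw [← hπ.2, ← hΓ2, Measure.map_map measurable_snd hm]; rfl
  have hx := ae_mem_of_map (by fun_prop) hρ hmx
  have hy := ae_mem_of_map (by fun_prop) hμ hmy
  have hz := ae_mem_of_map (by fun_prop) hν hmz
  have hT : Measurable (fun q : (Ed d × Ed d) × Ed d => ((1 - t) • q.1.1 + t • q.1.2, q.2)) := by
    fun_prop
  have hcoup : IsCoupling (γ.map fun p => (1 - t) • p.1 + t • p.2) ν
      (Γ.map fun q => ((1 - t) • q.1.1 + t • q.1.2, q.2)) := by
    constructor
    · rw [Measure.map_map measurable_fst hT, ← hΓ1, Measure.map_map (by fun_prop) measurable_fst]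
      rfl
    · rw [Measure.map_map measurable_snd hT, ← hmz]; rfl
  have hF : Continuous (fun p : Ed d × Ed d => ‖p.1 - p.2‖) := by fun_prop
  have i1 : Integrable (fun q : (Ed d × Ed d) × Ed d => ‖q.1.1 - q.2‖) Γ :=
    integrable_of_ae_mem hΩc (by fun_prop) (by fun_prop) hx hz hF
  have i2 : Integrable (fun q : (Ed d × Ed d) × Ed d => ‖q.1.1 - q.1.2‖) Γ :=
    integrable_of_ae_mem hΩc (by fun_prop) (by fun_prop) hx hy hF
  calc W1 (γ.map fun p => (1 - t) • p.1 + t • p.2) ν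
      ≤ ∫ p, ‖p.1 - p.2‖ ∂(Γ.map fun q => ((1 - t) • q.1.1 + t • q.1.2, q.2)) :=
        tCost_le (c := fun x y => ‖x - y‖) (fun _ _ => norm_nonneg _) hcoup
    _ = ∫ q, ‖(1 - t) • q.1.1 + t • q.1.2 - q.2‖ ∂Γ :=
        integral_map hT.aemeasurable hF.aestronglyMeasurable
    _ ≤ ∫ q, (‖q.1.1 - q.2‖ + t * ‖q.1.1 - q.1.2‖) ∂Γ := by
        refine integral_mono_of_nonneg (ae_of_all _ fun _ => norm_nonneg _)
          (i1.add (i2.const_mul t)) (ae_of_all _ fun q => ?_)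
        have e : (1 - t) • q.1.1 + t • q.1.2 - q.2 = (q.1.1 - q.2) - t • (q.1.1 - q.1.2) := by
          module
        simp only [e]
        refine (norm_sub_le _ _).trans_eq ?_
        rw [norm_smul, Real.norm_of_nonneg ht0]
    _ = ∫ p, ‖p.1 - p.2‖ ∂π + t * ∫ p, ‖p.1 - p.2‖ ∂γ := by
        rw [integral_add i1 (i2.const_mul t), integral_const_mul, ← hΓ2, ← hΓ1,
          integral_map hm.aemeasurable hF.aestronglyMeasurable,
          integral_map measurable_fst.aemeasurable hF.aestronglyMeasurable]

lemma W2sq_interp_le {ρ μ : Measure (Ed d)}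
    {γ : Measure (Ed d × Ed d)} (hγ : IsCoupling ρ μ γ) (t : ℝ) :
    W2sq (γ.map fun p => (1 - t) • p.1 + t • p.2) μ ≤ (1 - t) ^ 2 * ∫ p, ‖p.1 - p.2‖ ^ 2 ∂γ := by
  have hT : Measurable (fun p : Ed d × Ed d => ((1 - t) • p.1 + t • p.2, p.2)) := by fun_prop
  have hcoup : IsCoupling (γ.map fun p => (1 - t) • p.1 + t • p.2) μ
      (γ.map fun p => ((1 - t) • p.1 + t • p.2, p.2)) := by
    constructor
    · rw [Measure.map_map measurable_fst hT]; rfl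
    · rw [Measure.map_map measurable_snd hT, ← hγ.2]; rfl
  refine (tCost_le (c := fun x y => ‖x - y‖ ^ 2) (fun _ _ => by positivity) hcoup).trans_eq ?_
  rw [integral_map hT.aemeasurable (Continuous.aestronglyMeasurable (by fun_prop)),
    ← integral_const_mul]
  refine integral_congr_ae (ae_of_all _ fun p => ?_)
  have e : (1 - t) • p.1 + t • p.2 - p.2 = (1 - t) • (p.1 - p.2) := by module
  simp only [e, norm_smul, mul_pow, Real.norm_eq_abs, sq_abs]

lemma probOn_interp {Ω : Set (Ed d)} (hΩc : IsCompact Ω) (hΩconv : Convex ℝ Ω)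
    {ρ μ : Measure (Ed d)} (hρ : ProbOn Ω ρ) (hμ : ProbOn Ω μ)
    {γ : Measure (Ed d × Ed d)} (hγ : IsCoupling ρ μ γ) {t : ℝ} (ht0 : 0 ≤ t) (ht1 : t ≤ 1) :
    ProbOn Ω (γ.map fun p => (1 - t) • p.1 + t • p.2) := by
  have := hρ.1
  have := hγ.isProbabilityMeasure
  have hm : Measurable (fun p : Ed d × Ed d => (1 - t) • p.1 + t • p.2) := by fun_prop
  refine ⟨Measure.isProbabilityMeasure_map hm.aemeasurable, ?_⟩
  rw [Measure.map_apply hm hΩc.measurableSet.compl]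
  have h : ∀ᵐ p ∂γ, (1 - t) • p.1 + t • p.2 ∈ Ω := by
    filter_upwards [ae_mem_of_map measurable_fst hρ hγ.1,
      ae_mem_of_map measurable_snd hμ hγ.2] with p h1 h2
    exact hΩconv h1 h2 (by linarith) ht0 (by ring)
  exact mem_ae_iff.1 h

/-- One step of the scheme: a minimizer of `W₂²(·,μ)/2 + λ W₁(·,ν)` is within `W₂`-distance `λ`
of `μ`. -/
lemma W2sq_le_of_minimizer {Ω : Set (Ed d)} (hΩc : IsCompact Ω) (hΩconv : Convex ℝ Ω)
    {ρ μ ν : Measure (Ed d)} (hρ : ProbOn Ω ρ) (hμ : ProbOn Ω μ) (hν : ProbOn Ω ν)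
    {lam : ℝ} (hlam : 0 ≤ lam)
    (hmin : ∀ σ, ProbOn Ω σ →
      W2sq ρ μ / 2 + lam * W1 ρ ν ≤ W2sq σ μ / 2 + lam * W1 σ ν) :
    W2sq ρ μ ≤ lam ^ 2 := by
  have := hρ.1
  have := hμ.1
  have step : ∀ t : ℝ, 0 ≤ t → t ≤ 1 → ∀ γ, IsCoupling ρ μ γ →
      W2sq ρ μ ≤ (1 - t) ^ 2 * (∫ p, ‖p.1 - p.2‖ ^ 2 ∂γ)
        + t * (lam ^ 2 + ∫ p, ‖p.1 - p.2‖ ^ 2 ∂γ) := by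
    intro t ht0 ht1 γ hγ
    have := hγ.isProbabilityMeasure
    have h1 := hmin _ (probOn_interp hΩc hΩconv hρ hμ hγ ht0 ht1)
    have h2 := mul_le_mul_of_nonneg_left (W1_interp_le hΩc hρ hμ hν hγ ht0) hlam
    have h3 := W2sq_interp_le hγ t
    have hx := ae_mem_of_map measurable_fst hρ hγ.1
    have hy := ae_mem_of_map measurable_snd hμ hγ.2
    have i2 : Integrable (fun p : Ed d × Ed d => ‖p.1 - p.2‖ ^ 2) γ :=
      integrable_of_ae_mem hΩc measurable_fst measurable_snd hx hy
        (F := fun p => ‖p.1 - p.2‖ ^ 2) (by fun_prop)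
    have h4 : 2 * lam * ∫ p, ‖p.1 - p.2‖ ∂γ ≤ lam ^ 2 + ∫ p, ‖p.1 - p.2‖ ^ 2 ∂γ := by
      rw [← integral_const_mul]
      calc _ ≤ ∫ p, (lam ^ 2 + ‖p.1 - p.2‖ ^ 2) ∂γ := by
            refine integral_mono_of_nonneg (ae_of_all _ fun _ => by positivity)
              ((integrable_const _).add i2) (ae_of_all _ fun p => ?_)
            exact two_mul_le_add_sq _ _
        _ = _ := by rw [integral_add (integrable_const _) i2]; simp
    have h5 := mul_le_mul_of_nonneg_left h4 ht0
    nlinarith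
  -- The inequality is closed in the transport cost, so it passes to the infimum.
  have hinf : ∀ t : ℝ, 0 ≤ t → t ≤ 1 →
      W2sq ρ μ ≤ (1 - t) ^ 2 * W2sq ρ μ + t * (lam ^ 2 + W2sq ρ μ) := by
    intro t ht0 ht1
    have hcl : IsClosed {A : ℝ | W2sq ρ μ ≤ (1 - t) ^ 2 * A + t * (lam ^ 2 + A)} :=
      isClosed_le continuous_const (by fun_prop)
    have hmem : W2sq ρ μ ∈ closure {r | ∃ γ : Measure (Ed d × Ed d), IsCoupling ρ μ γ ∧
        r = ∫ p, ‖p.1 - p.2‖ ^ 2 ∂γ} := by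
      refine csInf_mem_closure ⟨_, _, isCoupling_prod ρ μ, rfl⟩ ⟨0, ?_⟩
      rintro r ⟨γ, -, rfl⟩
      positivity
    refine closure_minimal ?_ hcl hmem
    rintro r ⟨γ, hγ, rfl⟩
    exact step t ht0 ht1 γ hγ
  have hdiv : ∀ t : ℝ, 0 < t → t ≤ 1 → (1 - t) * W2sq ρ μ ≤ lam ^ 2 := by
    intro t ht0 ht1
    have h := hinf t ht0.le ht1
    refine le_of_mul_le_mul_left ?_ ht0
    linarith
  have hlim : Tendsto (fun t : ℝ => (1 - t) * W2sq ρ μ) (𝓝[>] 0) (𝓝 ((1 - 0) * W2sq ρ μ)) :=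
    (Continuous.tendsto (by fun_prop) 0).mono_left nhdsWithin_le_nhds
  have := le_of_tendsto hlim (by
    filter_upwards [Ioc_mem_nhdsGT one_pos] with t ht using hdiv t ht.1 ht.2)
  linarith

/-- multiscale transport: convergence rate. Let `Ω ⊂ ℝ^d` be compact
convex with non-negligible interior, `μ, ν ∈ 𝒫(Ω)` with `μ ≪ Lebesgue`, `λ₀ > 0`,
`λ_n = λ₀/2^n`, `ν₀ = ν`, and `ν_{n+1}` the minimizer over `𝒫(Ω)` of
`ρ ↦ (1/2)W₂²(ρ,μ) + λ_n W₁(ρ,ν_n)`. Then for all `n ≥ 1`,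
`(1/2)W₂²(μ,ν_n) ≤ 2^{-2n+1} λ₀²`. -/
theorem stmt18 (d : ℕ) (Ω : Set (Ed d)) (hΩc : IsCompact Ω) (hΩconv : Convex ℝ Ω)
    (hΩint : volume (interior Ω) ≠ 0)
    (μ ν : Measure (Ed d)) (hμ : ProbOn Ω μ) (hν : ProbOn Ω ν)
    (hμac : μ ≪ (volume : Measure (Ed d)))
    (lam0 : ℝ) (hlam0 : 0 < lam0)
    (νs : ℕ → Measure (Ed d)) (h0 : νs 0 = ν)
    (hstep : ∀ n : ℕ, ProbOn Ω (νs (n + 1)) ∧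
      ∀ ρ, ProbOn Ω ρ →
        W2sq (νs (n + 1)) μ / 2 + (lam0 / 2 ^ n) * W1 (νs (n + 1)) (νs n)
          ≤ W2sq ρ μ / 2 + (lam0 / 2 ^ n) * W1 ρ (νs n)) :
    ∀ n : ℕ, 1 ≤ n → W2sq μ (νs n) / 2 ≤ (2 : ℝ) ^ (-2 * (n : ℤ) + 1) * lam0 ^ 2 := by
  intro n hn
  obtain ⟨m, rfl⟩ : ∃ m, n = m + 1 := ⟨n - 1, by omega⟩
  have hprob : ProbOn Ω (νs m) := by
    cases m with
    | zero => rwa [h0]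
    | succ k => exact (hstep k).1
  have h := W2sq_le_of_minimizer hΩc hΩconv (hstep m).1 hμ hprob (by positivity) (hstep m).2
  rw [W2sq_comm]
  have e : (2 : ℝ) ^ (-2 * ((m + 1 : ℕ) : ℤ) + 1) = ((2 : ℝ) ^ m)⁻¹ ^ 2 / 2 := by
    rw [show (-2 * ((m + 1 : ℕ) : ℤ) + 1) = -(m : ℤ) + -(m : ℤ) + -1 by push_cast; ring,
      zpow_add₀ two_ne_zero, zpow_add₀ two_ne_zero, zpow_neg, zpow_natCast, zpow_neg_one]
    ring
  rw [e]
  rw [div_pow] at h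
  calc W2sq (νs (m + 1)) μ / 2 ≤ lam0 ^ 2 / (2 ^ m) ^ 2 / 2 := by linarith
    _ = _ := by rw [inv_pow]; ring
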